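/- Suppose that π₀ is the identity permutation of [μ] and that every eligible reversal {x,y} ∈ 𝓔 satisfies x ≡ y (mod 2). Then for every r ≥ 0 and every x ∈ [μ], π_r(x) ≡ x (mod 2); that is, every iterate π_r of the T-operator preserves the parity of each element. -/

import Mathlib

/-!
Call a maximal run `[c, d]` of positions joined by red colors a *block*: `c⁻` and `d⁺` are green and
all positions strictly inside are red. The proof carries through the iteration the invariant
`Inv`: `π` preserves parity, and every block `[c, d]` has `c ≡ d (mod 2)`.

In a step, `a` is the left end of the block of `i` (whose right end is `i`), and `b` is the right
end of the block of `j` (whose left end is `j`), so `a ≡ i ≡ π i ≡ π j ≡ j ≡ b`. The new value at `k`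
is the old one at `c + d - (a + b - k)`, where `[c, d]` is the block of `a + b - k`; since `c + d` and
`a + b` are both even, this position has the parity of `k`. Finally the blocks of the new coloring
are `[a, b]` and the old blocks outside `[a, b]`, so they all satisfy the parity condition.
-/

attribute [local instance] Classical.propDecidable

inductive Col where
  | green : Col
  | red : Col
deriving DecidableEq

namespace TOp

/-- The color of position `k⁺`; positions outside `{lo⁺, …, (hi−1)⁺}` count as green. -/
def fpos (lo hi : ℕ) (f : ℕ → Col) (k : ℕ) : Col :=
  if lo ≤ k ∧ k + 1 ≤ hi then f k else Col.green

/-- `j` is a candidate value for `j_{(π,f)}` : there is `i < j` with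
`f(i⁺) = f(j⁻) = green` and `{i,j} ∈ π⁻¹(𝓔)`. -/
def jSpec (lo hi : ℕ) (E : ℕ → ℕ → Prop) (π : ℕ → ℕ) (f : ℕ → Col) (j : ℕ) : Prop :=
  lo ≤ j ∧ j ≤ hi ∧ ∃ i, lo ≤ i ∧ i < j ∧
    fpos lo hi f i = Col.green ∧ fpos lo hi f (j - 1) = Col.green ∧ E (π i) (π j)

/-- `(π,f)` is not a fixed point of `T`, i.e. `j_{(π,f)} < +∞`. -/
def hasJ (lo hi : ℕ) (E : ℕ → ℕ → Prop) (π : ℕ → ℕ) (f : ℕ → Col) : Prop :=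
  ∃ j, jSpec lo hi E π f j

/-- `j_{(π,f)}` (junk value if no candidate exists). -/
noncomputable def jVal (lo hi : ℕ) (E : ℕ → ℕ → Prop) (π : ℕ → ℕ) (f : ℕ → Col) : ℕ :=
  sInf {j | jSpec lo hi E π f j}

/-- `i_{(π,f)}`. -/
noncomputable def iVal (lo hi : ℕ) (E : ℕ → ℕ → Prop) (π : ℕ → ℕ) (f : ℕ → Col) : ℕ :=
  sSup {i | lo ≤ i ∧ i < jVal lo hi E π f ∧ fpos lo hi f i = Col.green ∧
    E (π i) (π (jVal lo hi E π f))}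

/-- `a_{(π,f)}(k)`. -/
noncomputable def aVal (lo hi : ℕ) (f : ℕ → Col) (k : ℕ) : ℕ :=
  if fpos lo hi f (k - 1) = Col.green then k
  else sInf {i' | i' ≤ k ∧ ∀ i'', i' ≤ i'' → i'' < k → fpos lo hi f i'' = Col.red}

/-- `b_{(π,f)}(k)`. -/
noncomputable def bVal (lo hi : ℕ) (f : ℕ → Col) (k : ℕ) : ℕ :=
  if fpos lo hi f k = Col.green then k
  else sSup {j' | k ≤ j' ∧ ∀ j'', k < j'' → j'' ≤ j' → fpos lo hi f (j'' - 1) = Col.red}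

/-- The operator `T` on states `(π, f)`. -/
noncomputable def Tstep (lo hi : ℕ) (E : ℕ → ℕ → Prop)
    (s : (ℕ → ℕ) × (ℕ → Col)) : (ℕ → ℕ) × (ℕ → Col) :=
  if hasJ lo hi E s.1 s.2 then
    let a := aVal lo hi s.2 (iVal lo hi E s.1 s.2)
    let b := bVal lo hi s.2 (jVal lo hi E s.1 s.2)
    (fun k => if a ≤ k ∧ k ≤ b then
        s.1 (aVal lo hi s.2 (a + b - k) + bVal lo hi s.2 (a + b - k) - (a + b - k))
      else s.1 k,
     fun k => if a ≤ k ∧ k < b then Col.red else s.2 k)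
  else s

/-- `(π_r, f_r) = T^r(π₀, 𝐠𝐫𝐞𝐞𝐧)`. -/
noncomputable def TIter (lo hi : ℕ) (E : ℕ → ℕ → Prop) (π₀ : ℕ → ℕ) (r : ℕ) :
    (ℕ → ℕ) × (ℕ → Col) :=
  (Tstep lo hi E)^[r] (π₀, fun _ => Col.green)

/-- `j_{(π,f)}` as an extended natural number (`⊤` encodes `+∞`). -/
noncomputable def jE (lo hi : ℕ) (E : ℕ → ℕ → Prop) (π : ℕ → ℕ) (f : ℕ → Col) : ℕ∞ :=
  if hasJ lo hi E π f then (jVal lo hi E π f : ℕ∞) else ⊤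

end TOp

namespace TOp

/-- `[c, d] ⊆ [μ]` is a block (a maximal run of positions joined by red) of the coloring `f`. The
outer positions `0⁺ = 1⁻` and `μ⁺` count as green, by the convention in `fpos`. -/
def IsBlock (μ : ℕ) (f : ℕ → Col) (c d : ℕ) : Prop :=
  1 ≤ c ∧ c ≤ d ∧ d ≤ μ ∧ fpos 1 μ f (c - 1) = Col.green ∧ fpos 1 μ f d = Col.green ∧
    ∀ t, c ≤ t → t < d → fpos 1 μ f t = Col.red

/-- The invariant of the iteration: `π` maps every position to a label of the same parity, and the
two ends of each block have the same parity. -/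
def Inv (μ : ℕ) (s : (ℕ → ℕ) × (ℕ → Col)) : Prop :=
  (∀ x, 1 ≤ x → x ≤ μ → s.1 x % 2 = x % 2) ∧
    ∀ c d, IsBlock μ s.2 c d → c % 2 = d % 2

lemma eq_red_of_ne_green {c : Col} (h : c ≠ Col.green) : c = Col.red := by
  cases c <;> simp_all

lemma fpos_zero (μ : ℕ) (f : ℕ → Col) : fpos 1 μ f 0 = Col.green := by
  simp [fpos]

lemma fpos_of_le {μ k : ℕ} (f : ℕ → Col) (h : μ ≤ k) : fpos 1 μ f k = Col.green := by
  unfold fpos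
  rw [if_neg (by omega)]

lemma aVal_spec {μ k : ℕ} (f : ℕ → Col) (hk : 1 ≤ k) :
    1 ≤ aVal 1 μ f k ∧ aVal 1 μ f k ≤ k ∧ fpos 1 μ f (aVal 1 μ f k - 1) = Col.green ∧
      ∀ t, aVal 1 μ f k ≤ t → t < k → fpos 1 μ f t = Col.red := by
  by_cases hg : fpos 1 μ f (k - 1) = Col.green
  · have e : aVal 1 μ f k = k := by unfold aVal; rw [if_pos hg]
    rw [e]
    exact ⟨hk, le_rfl, hg, fun t _ _ => by omega⟩
  · set S : Set ℕ := {i' | i' ≤ k ∧ ∀ i'', i' ≤ i'' → i'' < k → fpos 1 μ f i'' = Col.red} with hS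
    have e : aVal 1 μ f k = sInf S := by unfold aVal; rw [if_neg hg]
    have hne : S.Nonempty := ⟨k, le_rfl, fun t _ _ => by omega⟩
    obtain ⟨h1, h2⟩ := Nat.sInf_mem hne
    rw [← e] at h1 h2
    have hpos : 1 ≤ aVal 1 μ f k := by
      by_contra h0
      have := h2 0 (by omega) (by omega)
      rw [fpos_zero] at this
      cases this
    refine ⟨hpos, h1, ?_, h2⟩
    -- otherwise `a - 1` would be a smaller element of `S`
    by_contra hr
    have hr := eq_red_of_ne_green hr
    have hm : aVal 1 μ f k - 1 ∈ S := by
      refine ⟨by omega, fun t ht htk => ?_⟩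
      by_cases hta : t = aVal 1 μ f k - 1
      · rw [hta]; exact hr
      · exact h2 t (by omega) htk
    have := Nat.sInf_le hm
    omega

lemma bVal_spec {μ k : ℕ} (f : ℕ → Col) (hk : k ≤ μ) :
    k ≤ bVal 1 μ f k ∧ bVal 1 μ f k ≤ μ ∧ fpos 1 μ f (bVal 1 μ f k) = Col.green ∧
      ∀ t, k ≤ t → t < bVal 1 μ f k → fpos 1 μ f t = Col.red := by
  by_cases hg : fpos 1 μ f k = Col.green
  · have e : bVal 1 μ f k = k := by unfold bVal; rw [if_pos hg]
    rw [e]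
    exact ⟨le_rfl, hk, hg, fun t _ _ => by omega⟩
  · set S : Set ℕ :=
      {j' | k ≤ j' ∧ ∀ j'', k < j'' → j'' ≤ j' → fpos 1 μ f (j'' - 1) = Col.red} with hS
    have e : bVal 1 μ f k = sSup S := by unfold bVal; rw [if_neg hg]
    have hne : S.Nonempty := ⟨k, le_rfl, fun t _ _ => by omega⟩
    have hub : ∀ j ∈ S, j ≤ μ := by
      rintro j ⟨hj1, hj2⟩
      by_contra hj
      have := hj2 j (by omega) le_rfl
      rw [fpos_of_le f (by omega)] at this
      cases this
    have hbdd : BddAbove S := ⟨μ, hub⟩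
    have hmem := Nat.sSup_mem hne hbdd
    rw [← e] at hmem
    obtain ⟨h1, h2⟩ := hmem
    refine ⟨h1, hub _ ⟨h1, h2⟩, ?_, fun t ht htb => by simpa using h2 (t + 1) (by omega) (by omega)⟩
    -- otherwise `b + 1` would be a larger element of `S`
    by_contra hr
    have hr := eq_red_of_ne_green hr
    have hm : bVal 1 μ f k + 1 ∈ S := by
      refine ⟨by omega, fun t ht htk => ?_⟩
      by_cases hta : t = bVal 1 μ f k + 1
      · rw [hta]; exact hr
      · exact h2 t ht (by omega)
    have := le_csSup hbdd hm
    omega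

lemma isBlock_aVal_bVal {μ k : ℕ} (f : ℕ → Col) (h1 : 1 ≤ k) (h2 : k ≤ μ) :
    IsBlock μ f (aVal 1 μ f k) (bVal 1 μ f k) := by
  obtain ⟨a1, a2, a3, a4⟩ := aVal_spec (μ := μ) f h1
  obtain ⟨b1, b2, b3, b4⟩ := bVal_spec f h2
  refine ⟨a1, by omega, b2, a3, b3, fun t ht ht' => ?_⟩
  rcases lt_or_ge t k with h | h
  · exact a4 t ht h
  · exact b4 t h ht'

lemma fpos_recolor {μ a b : ℕ} (f : ℕ → Col) (ha : 1 ≤ a) (hb : b ≤ μ) (k : ℕ) :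
    fpos 1 μ (fun k => if a ≤ k ∧ k < b then Col.red else f k) k =
      if a ≤ k ∧ k < b then Col.red else fpos 1 μ f k := by
  unfold fpos
  by_cases h : a ≤ k ∧ k < b
  · simp only [if_pos h]
    rw [if_pos (by omega)]
  · simp only [if_neg h]

/-- Coloring `a⁺, …, (b-1)⁺` red, where `a` and `b` have the same parity and `a⁻`, `b⁺` are green, keeps the parity condition on blocks. -/
lemma parity_recolor {μ a b : ℕ} {f : ℕ → Col} (ha : 1 ≤ a) (hb : b ≤ μ)
    (hga : fpos 1 μ f (a - 1) = Col.green) (hgb : fpos 1 μ f b = Col.green)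
    (hpar : a % 2 = b % 2) (hf : ∀ c d, IsBlock μ f c d → c % 2 = d % 2) (c d : ℕ)
    (hcd : IsBlock μ (fun k => if a ≤ k ∧ k < b then Col.red else f k) c d) :
    c % 2 = d % 2 := by
  obtain ⟨h1, h2, h3, h4, h5, h6⟩ := hcd
  simp only [fpos_recolor f ha hb] at h4 h5 h6
  have hc : ¬ (a ≤ c - 1 ∧ c - 1 < b) := by
    intro h; rw [if_pos h] at h4; cases h4
  have hd : ¬ (a ≤ d ∧ d < b) := by
    intro h; rw [if_pos h] at h5; cases h5
  rw [if_neg hc] at h4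
  rw [if_neg hd] at h5
  by_cases hout : d < a ∨ b < c
  · refine hf c d ⟨h1, h2, h3, h4, h5, fun t ht ht' => ?_⟩
    have := h6 t ht ht'
    rwa [if_neg (by omega)] at this
  · -- a block meeting `[a, b]` cannot extend past the green positions `a⁻` and `b⁺`
    have hca : ¬ c < a := by
      intro h
      have := h6 (a - 1) (by omega) (by omega)
      rw [if_neg (by omega), hga] at this
      cases this
    have hdb : ¬ b < d := by
      intro h
      have := h6 b (by omega) (by omega)
      rw [if_neg (by omega), hgb] at this
      cases this
    have e1 : c = a := by omega
    have e2 : d = b := by omega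
    rw [e1, e2, hpar]

lemma jVal_spec {μ : ℕ} {E : ℕ → ℕ → Prop} {π : ℕ → ℕ} {f : ℕ → Col} (h : hasJ 1 μ E π f) :
    jSpec 1 μ E π f (jVal 1 μ E π f) :=
  Nat.sInf_mem (s := {j | jSpec 1 μ E π f j}) h

lemma iVal_spec {μ : ℕ} {E : ℕ → ℕ → Prop} {π : ℕ → ℕ} {f : ℕ → Col} (h : hasJ 1 μ E π f) :
    1 ≤ iVal 1 μ E π f ∧ iVal 1 μ E π f < jVal 1 μ E π f ∧
      fpos 1 μ f (iVal 1 μ E π f) = Col.green ∧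
      E (π (iVal 1 μ E π f)) (π (jVal 1 μ E π f)) := by
  obtain ⟨-, -, i, h1, h2, h3, -, h4⟩ := jVal_spec h
  exact Nat.sSup_mem (s := {i | 1 ≤ i ∧ i < jVal 1 μ E π f ∧ fpos 1 μ f i = Col.green ∧
    E (π i) (π (jVal 1 μ E π f))}) ⟨i, h1, h2, h3, h4⟩ ⟨jVal 1 μ E π f, fun _ hx => hx.2.1.le⟩

lemma Inv.step {μ : ℕ} {E : ℕ → ℕ → Prop} (hEpar : ∀ x y, E x y → x % 2 = y % 2)
    {s : (ℕ → ℕ) × (ℕ → Col)} (hs : Inv μ s) : Inv μ (Tstep 1 μ E s) := by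
  obtain ⟨π, f⟩ := s
  obtain ⟨hπ, hf⟩ := hs
  unfold Tstep
  split_ifs with hJ
  · simp only at hπ hf hJ ⊢
    obtain ⟨-, hjμ, -, -, -, -, hjg, -⟩ := jVal_spec hJ
    obtain ⟨hi1, hij, hig, hE⟩ := iVal_spec hJ
    generalize iVal 1 μ E π f = i at *
    generalize jVal 1 μ E π f = j at *
    have hBi := isBlock_aVal_bVal (μ := μ) f hi1 (by omega)
    have hBj := isBlock_aVal_bVal (μ := μ) (k := j) f (by omega) hjμ
    have hbi : bVal 1 μ f i = i := by unfold bVal; rw [if_pos hig]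
    have haj : aVal 1 μ f j = j := by unfold aVal; rw [if_pos hjg]
    rw [hbi] at hBi
    rw [haj] at hBj
    generalize aVal 1 μ f i = a at *
    generalize bVal 1 μ f j = b at *
    have hpi := hf _ _ hBi
    have hpj := hf _ _ hBj
    have hpE := hEpar _ _ hE
    rw [hπ i hi1 (by omega), hπ j (by omega) hjμ] at hpE
    have hab : a % 2 = b % 2 := by omega
    obtain ⟨ha1, hai, -, hag, -, -⟩ := hBi
    obtain ⟨-, hjb, hbμ, -, hbg, -⟩ := hBj
    refine ⟨fun x hx1 hx2 => ?_, parity_recolor ha1 hbμ hag hbg hab hf⟩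
    simp only
    split_ifs with hx
    · obtain ⟨c1, c2, -, -⟩ := aVal_spec (μ := μ) (k := a + b - x) f (by omega)
      obtain ⟨d1, d2, -, -⟩ := bVal_spec (μ := μ) (k := a + b - x) f (by omega)
      have hcd := hf _ _ (isBlock_aVal_bVal (μ := μ) (k := a + b - x) f (by omega) (by omega))
      rw [hπ _ (by omega) (by omega)]
      omega
    · exact hπ x hx1 hx2
  · exact ⟨hπ, hf⟩

lemma Inv.init (μ : ℕ) : Inv μ (fun n => n, fun _ => Col.green) := by
  refine ⟨fun _ _ _ => rfl, fun c d ⟨_, hcd, _, _, _, h⟩ => ?_⟩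
  -- in the all-green coloring every block is a single position
  rcases hcd.eq_or_lt with e | hlt
  · rw [e]
  · have := h c le_rfl hlt
    simp [fpos] at this

end TOp

open TOp in
/-- If `π₀` is the identity and every eligible reversal `{x,y} ∈ 𝓔`
satisfies `x ≡ y (mod 2)`, then every iterate `π_r` of the `T`-operator preserves the
parity of each element of `[μ]`. -/
theorem stmt12 (μ : ℕ) (hμ : 2 ≤ μ) (E : ℕ → ℕ → Prop)
    (hEsymm : ∀ x y, E x y → E y x)
    (hEirr : ∀ x, ¬ E x x)
    (hEmem : ∀ x y, E x y → 1 ≤ x ∧ x ≤ μ ∧ 1 ≤ y ∧ y ≤ μ)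
    (hEclique : ∀ x y z, E x y → E y z → x ≠ z → E x z)
    (hEpar : ∀ x y, E x y → x % 2 = y % 2)
    (r x : ℕ) (hx1 : 1 ≤ x) (hx2 : x ≤ μ) :
    (TIter 1 μ E (fun n => n) r).1 x % 2 = x % 2 := by
  suffices h : Inv μ (TIter 1 μ E (fun n => n) r) from h.1 x hx1 hx2
  unfold TIter
  induction r with
  | zero => exact Inv.init μ
  | succ n ih =>
    rw [Function.iterate_succ_apply']
    exact ih.step hEpar
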